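/- Let X^n be distributed according to the product law p_{X^n} of a DMS (X, p_X), let U_{d_n} be uniformly distributed on {1,…,2^{d_n}} and independent of X^n, and let M_n = 2^{nR}. Then for any encoder φ_n : X^n × {1,…,2^{d_n}} → {1,…,M_n} and any γ_n ∈ (0, M_n), the uniformity metric U_e(φ_n) = V(p_{φ_n(X^n, U_{d_n})}, uniform on {1,…,M_n}) satisfies U_e(φ_n) ≥ 2 ( P[ p_{X^n}(X^n) > 2^{d_n} / γ_n ] − γ_n / M_n ). -/

import Mathlib

open Finset Filter Real

attribute [local instance] Classical.propDecidable

noncomputable section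

/-- `p` is a probability mass function on the finite type `α`. -/
def IsPMF {α : Type*} [Fintype α] (p : α → ℝ) : Prop :=
  (∀ a, 0 ≤ p a) ∧ ∑ a, p a = 1

/-- i.i.d. (product) distribution of `n` copies of a source with pmf `p`. -/
def iid {α : Type*} [Fintype α] (p : α → ℝ) (n : ℕ) : (Fin n → α) → ℝ :=
  fun x => ∏ i, p (x i)

/-- variational distance between two pmfs -/
def VD {α : Type*} [Fintype α] (p q : α → ℝ) : ℝ := ∑ a, |p a - q a|

/-- Shannon entropy, base 2 -/
def Hsh {α : Type*} [Fintype α] (p : α → ℝ) : ℝ := - ∑ a, p a * Real.logb 2 (p a)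

/-- Rényi entropy of order 2, base 2 -/
def H2 {α : Type*} [Fintype α] (p : α → ℝ) : ℝ := - Real.logb 2 (∑ a, (p a) ^ 2)

/-- min-entropy, base 2 -/
def Hinf {α : Type*} [Fintype α] (p : α → ℝ) : ℝ := - Real.logb 2 (⨆ a, p a)

/-- Kullback–Leibler divergence, base 2 -/
def KL {α : Type*} [Fintype α] (p q : α → ℝ) : ℝ := ∑ a, p a * Real.logb 2 (p a / q a)

/-- pushforward of a pmf along a map -/
def push {α β : Type*} [Fintype α] [Fintype β] (p : α → ℝ) (f : α → β) : β → ℝ :=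
  fun b => ∑ a, if f a = b then p a else 0

/-- conditional mutual information `I(X;Y|Q)` of a joint pmf on `Q × X × Y`, base 2:
`I(X;Y|Q) = H(Q,X) + H(Q,Y) - H(Q) - H(Q,X,Y)`. -/
def condMI {Q X Y : Type*} [Fintype Q] [Fintype X] [Fintype Y] (p : Q × X × Y → ℝ) : ℝ :=
  Hsh (fun qx : Q × X => ∑ y, p (qx.1, qx.2, y))
    + Hsh (fun qy : Q × Y => ∑ x, p (qy.1, x, qy.2))
    - Hsh (fun q : Q => ∑ x, ∑ y, p (q, x, y))
    - Hsh p

/-- the set of `ε`-letter-typical sequences of length `n` -/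
def typ {α : Type*} [Fintype α] (p : α → ℝ) (n : ℕ) (ε : ℝ) : Finset (Fin n → α) :=
  Finset.univ.filter fun x =>
    ∀ a, |((Finset.univ.filter fun i => x i = a).card : ℝ) / n - p a| ≤ ε * p a

/-- cumulative distribution function of the standard normal distribution -/
def stdΦ (x : ℝ) : ℝ := ∫ t in Set.Iic x, Real.exp (-(t ^ 2) / 2) / Real.sqrt (2 * Real.pi)

/-- `⌈2^r⌉₊`, the size of a message set `{1,…,2^r}` -/
def e2 (r : ℝ) : ℕ := ⌈(2:ℝ) ^ r⌉₊

/-!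
With source law `p`, seed set `σ` and output set `β`, every atom `(x, u)` of the joint law of source
and seed has mass `p x / |σ|`, and encoding can only merge atoms. So a source symbol with
`p x > |σ| / γ` is sent, for every seed, to an output of probability greater than `1 / γ`. There are
at most `γ` such outputs, and the uniform law gives them mass at most `γ / |β|`. The excess of the
output law over the uniform law on this set of outputs is matched by a deficit on the complement,
whence the factor `2`.
-/

section VariationalDistance

variable {α : Type*} [Fintype α]

theorem two_mul_sum_sub_sum_le_VD {p q : α → ℝ} (hpq : ∑ a, p a = ∑ a, q a) (s : Finset α) :
    2 * (∑ a ∈ s, p a - ∑ a ∈ s, q a) ≤ VD p q := by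
  have on_event : ∑ a ∈ s, p a - ∑ a ∈ s, q a ≤ ∑ a ∈ s, |p a - q a| := by
    rw [← sum_sub_distrib]
    exact sum_le_sum fun a _ => le_abs_self _
  have on_compl : ∑ a ∈ sᶜ, q a - ∑ a ∈ sᶜ, p a ≤ ∑ a ∈ sᶜ, |p a - q a| := by
    rw [← sum_sub_distrib]
    exact sum_le_sum fun a _ => abs_sub_comm (p a) (q a) ▸ le_abs_self _
  have split_p := sum_add_sum_compl s p
  have split_q := sum_add_sum_compl s q
  have split_VD : ∑ a ∈ s, |p a - q a| + ∑ a ∈ sᶜ, |p a - q a| = VD p q :=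
    sum_add_sum_compl s fun a => |p a - q a|
  linarith

end VariationalDistance

section Distributions

variable {α β : Type*} [Fintype α]

/-- The uniform distribution on a finite type. On an empty type it is the empty function, which is
not a probability mass function. -/
def uniformPMF (α : Type*) [Fintype α] : α → ℝ := fun _ => 1 / Fintype.card α

/-- The joint distribution of two independent variables with distributions `p` and `q`. -/
def prodPMF (p : α → ℝ) (q : β → ℝ) : α × β → ℝ := fun z => p z.1 * q z.2

theorem isPMF_uniformPMF [Nonempty α] : IsPMF (uniformPMF α) :=
  ⟨fun _ => by unfold uniformPMF; positivity, by simp [uniformPMF]⟩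

theorem isPMF_prodPMF [Fintype β] {p : α → ℝ} {q : β → ℝ} (hp : IsPMF p) (hq : IsPMF q) :
    IsPMF (prodPMF p q) :=
  ⟨fun z => mul_nonneg (hp.1 z.1) (hq.1 z.2), by
    simp only [prodPMF, Fintype.sum_prod_type, ← mul_sum, hq.2, mul_one, hp.2]⟩

theorem isPMF_iid {p : α → ℝ} (hp : IsPMF p) (n : ℕ) : IsPMF (iid p n) :=
  ⟨fun x => prod_nonneg fun i _ => hp.1 (x i), by
    simp only [iid, ← Fintype.prod_sum fun (_ : Fin n) a => p a, hp.2, prod_const_one]⟩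

theorem IsPMF.nonempty {p : α → ℝ} (hp : IsPMF p) : Nonempty α := by
  by_contra h
  have := not_nonempty_iff.mp h
  simpa using hp.2

theorem IsPMF.card_filter_lt_le {p : α → ℝ} (hp : IsPMF p) {γ : ℝ} (hγ : 0 < γ) :
    (#{a | 1 / γ < p a} : ℝ) ≤ γ := by
  have markov : #{a | 1 / γ < p a} • (1 / γ) ≤ 1 :=
    calc #{a | 1 / γ < p a} • (1 / γ)
      _ ≤ ∑ a with 1 / γ < p a, p a :=
          card_nsmul_le_sum _ _ _ fun a ha => (mem_filter.mp ha).2.le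
      _ ≤ ∑ a, p a := sum_le_univ_sum_of_nonneg hp.1
      _ = 1 := hp.2
  rwa [nsmul_eq_mul, mul_one_div, div_le_one hγ] at markov

variable [Fintype β]

theorem sum_push (p : α → ℝ) (f : α → β) (s : Finset β) :
    ∑ b ∈ s, push p f b = ∑ a with f a ∈ s, p a := by
  simp only [push, sum_filter]
  rw [sum_comm]
  simp only [sum_ite_eq]

theorem isPMF_push {p : α → ℝ} (hp : IsPMF p) (f : α → β) : IsPMF (push p f) :=
  ⟨fun b => sum_nonneg fun a _ => ite_nonneg (hp.1 a) le_rfl, by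
    simpa only [mem_univ, filter_true, hp.2] using sum_push p f univ⟩

theorem le_push {p : α → ℝ} (hp : ∀ a, 0 ≤ p a) (f : α → β) (a : α) : p a ≤ push p f (f a) := by
  simpa only [push, if_true] using single_le_sum
    (f := fun a' => if f a' = f a then p a' else 0) (fun a' _ => ite_nonneg (hp a') le_rfl)
    (mem_univ a)

end Distributions

section Converse

variable {α β σ : Type*} [Fintype α] [Fintype β] [Fintype σ]

theorem two_mul_sum_filter_sub_le_VD_push {p : α → ℝ} (hp : IsPMF p) (f : α → β) {γ : ℝ}
    (hγ : 0 < γ) :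
    2 * ((∑ a with 1 / γ < p a, p a) - γ / Fintype.card β)
      ≤ VD (push p f) (uniformPMF β) := by
  have : Nonempty β := hp.nonempty.map f
  have hq := isPMF_push hp f
  set heavy : Finset β := {b | 1 / γ < push p f b}
  have heavy_of_lt : ∀ a ∈ univ, 1 / γ < p a → f a ∈ heavy := fun a _ ha =>
    mem_filter.mpr ⟨mem_univ _, ha.trans_le (le_push hp.1 f a)⟩
  have mass_le : ∑ a with 1 / γ < p a, p a ≤ ∑ b ∈ heavy, push p f b := by
    rw [sum_push]
    exact sum_le_sum_of_subset_of_nonneg (monotone_filter_right _ heavy_of_lt)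
      fun a _ _ => hp.1 a
  have uniform_le : ∑ b ∈ heavy, uniformPMF β b ≤ γ / Fintype.card β := by
    simp only [uniformPMF, sum_const, nsmul_eq_mul, mul_one_div]
    gcongr
    exact hq.card_filter_lt_le hγ
  have := two_mul_sum_sub_sum_le_VD (hq.2.trans isPMF_uniformPMF.2.symm) heavy
  linarith

theorem sum_filter_prodPMF_uniformPMF [Nonempty σ] (p : α → ℝ) (γ : ℝ) :
    ∑ z with 1 / γ < prodPMF p (uniformPMF σ) z, prodPMF p (uniformPMF σ) z
      = ∑ x with Fintype.card σ / γ < p x, p x := by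
  have hσ : (0 : ℝ) < Fintype.card σ := mod_cast Fintype.card_pos
  have threshold (x : α) : 1 / γ < p x * (1 / Fintype.card σ) ↔ Fintype.card σ / γ < p x := by
    rw [mul_one_div, lt_div_iff₀ hσ, one_div_mul_eq_div]
  simp only [sum_filter, Fintype.sum_prod_type, prodPMF, uniformPMF, threshold, sum_const,
    card_univ, nsmul_eq_mul, mul_ite, mul_zero]
  simp only [mul_one_div, mul_div_cancel₀ _ hσ.ne']

theorem statement13_general [Nonempty σ] {p : α → ℝ} (hp : IsPMF p) (φ : α × σ → β) {γ : ℝ}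
    (hγ : 0 < γ) :
    2 * ((∑ x with Fintype.card σ / γ < p x, p x) - γ / Fintype.card β)
      ≤ VD (push (prodPMF p (uniformPMF σ)) φ) (uniformPMF β) := by
  rw [← sum_filter_prodPMF_uniformPMF (σ := σ)]
  exact two_mul_sum_filter_sub_le_VD_push (isPMF_prodPMF hp isPMF_uniformPMF) φ hγ

end Converse

/-- Lemma 5: lower bound on the uniformity metric of any
seeded compression encoder. -/
theorem statement13 {X : Type*} [Fintype X] (pX : X → ℝ) (hX : IsPMF pX)
    (n d M : ℕ) (φ : (Fin n → X) × Fin (2 ^ d) → Fin M)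
    (γ : ℝ) (hγ0 : 0 < γ) (hγM : γ < M) :
    2 * ((∑ x : Fin n → X, if (2:ℝ) ^ d / γ < iid pX n x then iid pX n x else 0) - γ / M)
      ≤ VD (fun m : Fin M =>
              ∑ x : Fin n → X, ∑ u : Fin (2 ^ d),
                iid pX n x * (1 / (2:ℝ) ^ d) * (if φ (x, u) = m then 1 else 0))
           (fun _ => 1 / (M : ℝ)) := by
  simpa [sum_filter, VD, push, prodPMF, uniformPMF, Fintype.sum_prod_type] using
    statement13_general (isPMF_iid hX n) φ hγ0
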